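/- Let q be a prime power, let 1 ≤ s ≤ m be integers, let γ_1,…,γ_m be distinct elements of F_q^*, and let d_1 > d_2 > ⋯ > d_m ≥ 1 be integers. For i = 1,…,s define f_i(x_1,…,x_m) = Σ_{j=1}^m γ_j^i · x_j^{d_j}, and let V₀ = {x ∈ F_q^m : f_1(x) = ⋯ = f_s(x) = 0}. Let n be a multiple of m and let P = V₀ × V₀ × ⋯ × V₀ (n/m copies) ⊆ F_q^n. Then for every integer 1 ≤ k ≤ s, the set P is (k, (d_1)^k)-subspace-evasive: every F_q-linear subspace U ⊆ F_q^n of dimension k satisfies |U ∩ P| ≤ (d_1)^k. -/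

import Mathlib

open Finset

/-- The span of the monomials in the `t i` whose `w`-weighted degree is at most `n`. -/
def weightSpan (F : Type*) {ι A : Type*} [Fintype ι] [Field F] [CommRing A] [Algebra F A]
    (t : ι → A) (w : ι → ℕ) (n : ℕ) : Submodule F A :=
  Submodule.span F {y | ∃ a : ι → ℕ, ∑ i, w i * a i ≤ n ∧ ∏ i, t i ^ a i = y}

section WeightSpan

variable {F ι A : Type*} [Fintype ι] [Field F] [CommRing A] [Algebra F A]
  {t : ι → A} {w : ι → ℕ}

lemma weightSpan_mono {n n' : ℕ} (h : n ≤ n') : weightSpan F t w n ≤ weightSpan F t w n' :=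
  Submodule.span_mono fun _ ⟨a, ha, hy⟩ => ⟨a, ha.trans h, hy⟩

lemma one_mem_weightSpan (n : ℕ) : (1 : A) ∈ weightSpan F t w n :=
  Submodule.subset_span ⟨0, by simp, by simp⟩

lemma mul_mem_weightSpan {n n' : ℕ} {x y : A} (hx : x ∈ weightSpan F t w n)
    (hy : y ∈ weightSpan F t w n') : x * y ∈ weightSpan F t w (n + n') := by
  have h := Submodule.mul_mem_mul hx hy
  rw [weightSpan, weightSpan, Submodule.span_mul_span] at h
  refine Submodule.span_mono ?_ h
  rintro _ ⟨_, ⟨a, ha, rfl⟩, _, ⟨b, hb, rfl⟩, rfl⟩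
  refine ⟨a + b, ?_, ?_⟩
  · simp only [Pi.add_apply, mul_add, sum_add_distrib]
    omega
  · simp only [Pi.add_apply, pow_add, prod_mul_distrib]

lemma pow_mem_weightSpan {n : ℕ} {x : A} (hx : x ∈ weightSpan F t w n) (e : ℕ) :
    x ^ e ∈ weightSpan F t w (e * n) := by
  induction e with
  | zero => simpa using one_mem_weightSpan 0
  | succ e ih =>
    rw [pow_succ, add_mul, one_mul]
    exact mul_mem_weightSpan ih hx

lemma generator_mem_weightSpan (i : ι) : t i ∈ weightSpan F t w (w i) := by
  classical
  refine Submodule.subset_span ⟨Pi.single i 1, ?_, ?_⟩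
  · simp [Pi.single_apply]
  · simp [Pi.single_apply, pow_ite]

/-- If each power `t i ^ e i` rewrites to monomials of smaller weight, then every monomial is a
combination of monomials with all exponents below `e`. -/
lemma prod_pow_mem_span_reduced {e : ι → ℕ}
    (h : ∀ i, ∃ n < w i * e i, t i ^ e i ∈ weightSpan F t w n) (a : ι → ℕ) :
    ∏ i, t i ^ a i ∈
      Submodule.span F (Set.range fun b : ∀ i, Fin (e i) => ∏ i, t i ^ (b i : ℕ)) := by
  classical
  induction hN : ∑ i, w i * a i using Nat.strong_induction_on generalizing a with
  | _ N ih =>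
  by_cases hlt : ∀ i, a i < e i
  · exact Submodule.subset_span ⟨fun i => ⟨a i, hlt i⟩, rfl⟩
  push Not at hlt
  obtain ⟨i, hi⟩ := hlt
  obtain ⟨n, hn, hmem⟩ := h i
  have ha : a = Function.update a i (a i - e i) + Pi.single i (e i) := by
    ext j
    by_cases hj : j = i
    · subst hj; simp [hi]
    · simp [hj]
  set a' := Function.update a i (a i - e i)
  have hwt : ∑ j, w j * a' j + w i * e i = N := by
    rw [← hN, ha]
    simp [mul_add, sum_add_distrib, Pi.single_apply]
  have hprod : ∏ j, t j ^ a j = (∏ j, t j ^ a' j) * t i ^ e i := by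
    rw [ha]
    simp only [Pi.add_apply, pow_add, prod_mul_distrib]
    simp [Pi.single_apply, pow_ite]
  have hmem' : ∏ j, t j ^ a j ∈ weightSpan F t w (∑ j, w j * a' j + n) := by
    rw [hprod]
    exact mul_mem_weightSpan (Submodule.subset_span ⟨a', le_rfl, rfl⟩) hmem
  refine Submodule.span_le.2 ?_ hmem'
  rintro _ ⟨c, hc, rfl⟩
  exact ih _ (by omega) c rfl

end WeightSpan

/-- A finite set of points with coordinates `t` has at most `∏ i, e i` elements as soon as each
`t i ^ e i` is a combination of monomials of smaller weight. -/
lemma card_le_prod_of_pow_mem_weightSpan {F ι S : Type*} [Fintype ι] [Field F] [Finite F]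
    [Finite S] {t : ι → S → F} (ht : Function.Injective fun x i => t i x) {w e : ι → ℕ}
    (h : ∀ i, ∃ n < w i * e i, t i ^ e i ∈ weightSpan F t w n) :
    Nat.card S ≤ ∏ i, e i := by
  classical
  have := Fintype.ofFinite S
  have := Fintype.ofFinite F
  have htop : Submodule.span F
      (Set.range fun b : ∀ i, Fin (e i) => ∏ i, t i ^ (b i : ℕ)) = ⊤ := by
    refine eq_top_iff.2 fun g _ => ?_
    obtain ⟨g', rfl⟩ : ∃ g' : (ι → F) → F, g = fun x => g' fun i => t i x :=
      ⟨Function.extend (fun x i => t i x) g 0, funext fun x => (ht.extend_apply g 0 x).symm⟩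
    have hg' : g' ∈ (MvPolynomial.restrictDegree ι F (Fintype.card F - 1)).map
        (MvPolynomial.evalₗ F ι) := by
      rw [MvPolynomial.map_restrict_dom_evalₗ]; trivial
    obtain ⟨q, -, rfl⟩ := hg'
    have hq : (fun x => MvPolynomial.evalₗ F ι q fun i => t i x) =
        ∑ a ∈ q.support, q.coeff a • ∏ i, t i ^ a i := by
      ext x
      simp [MvPolynomial.evalₗ_apply, MvPolynomial.eval_eq']
    rw [hq]
    exact Submodule.sum_mem _ fun a _ => Submodule.smul_mem _ _ (prod_pow_mem_span_reduced h a)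
  have hle := finrank_range_le_card (R := F) fun b : ∀ i, Fin (e i) => ∏ i, t i ^ (b i : ℕ)
  rw [Set.finrank, htop, finrank_top, Module.finrank_fintype_fun_eq_card] at hle
  simpa using hle

/-- Greedy choice of a basis inside a finite family indexed by a linear order: every member is a
combination of the chosen members not exceeding it. -/
lemma exists_pivots {F V I : Type*} [Field F] [AddCommGroup V] [Module F V]
    [Module.Finite F V] [LinearOrder I] [Finite I] (v : I → V) :
    ∃ p : Finset I, #p ≤ Module.finrank F V ∧
      ∀ i, v i ∈ Submodule.span F (v '' {j | j ∈ p ∧ j ≤ i}) := by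
  classical
  have := Fintype.ofFinite I
  let p : Finset I := {i | v i ∉ Submodule.span F (v '' Set.Iio i)}
  refine ⟨p, ?_, fun i => ?_⟩
  · have hind : ∀ s : Finset I, s ⊆ p → LinearIndepOn F v (s : Set I) := by
      intro s
      induction s using Finset.induction_on_max with
      | empty => intro; simp
      | insert a s hs ih =>
        intro hsp
        rw [Finset.coe_insert]
        refine (ih fun x hx => hsp (mem_insert_of_mem hx)).insert fun hmem => ?_
        have ha : a ∈ p := hsp (mem_insert_self a s)
        exact (mem_filter.1 ha).2
          (Submodule.span_mono (Set.image_mono fun x hx => hs x hx) hmem)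
    have := (hind p subset_rfl).fintype_card_le_finrank
    simpa using this
  · induction i using WellFoundedLT.induction with
    | _ i ih =>
    by_cases hi : i ∈ p
    · exact Submodule.subset_span ⟨i, ⟨hi, le_rfl⟩, rfl⟩
    · have hi' : v i ∈ Submodule.span F (v '' Set.Iio i) := by
        by_contra hcon
        exact hi (mem_filter.2 ⟨mem_univ _, hcon⟩)
      refine Submodule.span_le.2 ?_ hi'
      rintro _ ⟨j, hj, rfl⟩
      refine Submodule.span_mono (Set.image_mono ?_) (ih j hj)
      exact fun l hl => ⟨hl.1, hl.2.trans (le_of_lt hj)⟩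

/-- Vandermonde elimination: a common zero of the power-sum equations satisfies, for each index
`j₀` in a set `Q` of at most `s` indices, an equation whose other terms lie outside `Q`. -/
lemma exists_elimination {F : Type*} [Field F] {s m : ℕ} {γ : Fin m → F}
    (hγinj : Function.Injective γ) (hγ0 : ∀ j, γ j ≠ 0) (Q : Finset (Fin m)) (hQ : #Q ≤ s)
    {j₀ : Fin m} (hj₀ : j₀ ∈ Q) :
    ∃ c : Fin m → F, ∀ y : Fin m → F,
      (∀ i : Fin s, ∑ j, γ j ^ ((i : ℕ) + 1) * y j = 0) → y j₀ = ∑ j ∈ Qᶜ, c j * y j := by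
  classical
  let P : Polynomial F := ∏ j ∈ Q.erase j₀, (Polynomial.X - Polynomial.C (γ j))
  have hdeg : P.natDegree < s := by
    rw [Polynomial.natDegree_prod_of_monic _ _ fun j _ => Polynomial.monic_X_sub_C _]
    simp only [Polynomial.natDegree_X_sub_C, sum_const, smul_eq_mul, mul_one]
    exact (card_erase_lt_of_mem hj₀).trans_le hQ
  have hzero : ∀ j ∈ Q, j ≠ j₀ → P.eval (γ j) = 0 := fun j hj hne => by
    rw [Polynomial.eval_prod]
    exact prod_eq_zero (mem_erase.2 ⟨hne, hj⟩) (by simp)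
  have hne : γ j₀ * P.eval (γ j₀) ≠ 0 := by
    refine mul_ne_zero (hγ0 _) ?_
    rw [Polynomial.eval_prod]
    refine prod_ne_zero_iff.2 fun j hj => ?_
    simpa [sub_eq_zero] using fun h => (mem_erase.1 hj).1 (hγinj h).symm
  refine ⟨fun j => -(γ j₀ * P.eval (γ j₀))⁻¹ * (γ j * P.eval (γ j)), fun y hy => ?_⟩
  have hsum : ∑ j, γ j * P.eval (γ j) * y j = 0 := by
    calc ∑ j, γ j * P.eval (γ j) * y j
        = ∑ j, ∑ i ∈ range s, P.coeff i * (γ j ^ (i + 1) * y j) := by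
          refine sum_congr rfl fun j _ => ?_
          rw [Polynomial.eval_eq_sum_range' hdeg, mul_sum, sum_mul]
          exact sum_congr rfl fun i _ => by ring
      _ = ∑ i ∈ range s, P.coeff i * ∑ j, γ j ^ (i + 1) * y j := by
          rw [sum_comm]
          simp only [mul_sum]
      _ = 0 := sum_eq_zero fun i hi => by
          rw [hy ⟨i, mem_range.1 hi⟩, mul_zero]
  rw [← sum_add_sum_compl Q, sum_eq_single_of_mem j₀ hj₀ fun j hj hjne => by
    rw [hzero j hj hjne]; simp] at hsum
  simp only [mul_assoc, neg_mul, sum_neg_distrib, ← mul_sum] at hsum hne ⊢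
  rw [eq_comm, neg_eq_iff_eq_neg, inv_mul_eq_iff_eq_mul₀ hne]
  linear_combination hsum

/-- In a strictly decreasing sequence of exponents, weighting coordinate `j` of block `b` by
`(d₀ + 1) ^ b * d₀! / d j` makes the `d j`-th powers dominate those of all earlier coordinates. -/
lemma mul_weight_lt {r m : ℕ} {d : Fin m → ℕ} (hd : StrictAnti d) (hd1 : ∀ j, 1 ≤ d j) {d₀ : ℕ}
    (hd₀ : ∀ j, d j ≤ d₀) {x y : Fin r ×ₗ Fin m} (h : y < x) :
    d (ofLex x).2 * ((d₀ + 1) ^ ((ofLex y).1 : ℕ) * (d₀.factorial / d (ofLex y).2)) <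
      (d₀ + 1) ^ ((ofLex x).1 : ℕ) * d₀.factorial := by
  have hpos : 0 < d₀.factorial := d₀.factorial_pos
  rcases Prod.Lex.lt_iff.1 h with hlt | ⟨heq, hlt⟩
  · calc _ ≤ d (ofLex x).2 * ((d₀ + 1) ^ ((ofLex y).1 : ℕ) * d₀.factorial) := by
          gcongr; exact Nat.div_le_self _ _
      _ < (d₀ + 1) * ((d₀ + 1) ^ ((ofLex y).1 : ℕ) * d₀.factorial) := by
          gcongr; exact Nat.lt_succ_of_le (hd₀ _)
      _ = (d₀ + 1) ^ (((ofLex y).1 : ℕ) + 1) * d₀.factorial := by ring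
      _ ≤ _ := by gcongr <;> [omega; exact hlt]
  · rw [heq, mul_left_comm]
    gcongr
    have hdvd : d (ofLex y).2 ∣ d₀.factorial := Nat.dvd_factorial (hd1 _) (hd₀ _)
    have hq : 0 < d₀.factorial / d (ofLex y).2 := Nat.div_pos (Nat.le_of_dvd hpos hdvd) (hd1 _)
    calc _ < d (ofLex y).2 * (d₀.factorial / d (ofLex y).2) := by gcongr; exact hd hlt
      _ = _ := Nat.mul_div_cancel' hdvd

/-- Dvir–Lovett, product sets are subspace-evasive. Let `q` be a prime
power, `1 ≤ s ≤ m`, `γ_1, …, γ_m` distinct elements of `F_q^*`, and `d_1 > ⋯ > d_m ≥ 1`.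
Let `V₀ ⊆ F_q^m` be the common zero set of the polynomials `f_i(x) = Σ_j γ_j^i x_j^{d_j}`
(`i = 1, …, s`), and let `P = V₀^r ⊆ F_q^n` where `n = m·r` (identifying `F_q^n` with
`(F_q^m)^r`). Then for every `1 ≤ k ≤ s`, the set `P` is `(k, d_1^k)`-subspace-evasive:
every `F_q`-linear subspace `U ⊆ F_q^n` of dimension `k` satisfies `|U ∩ P| ≤ d_1^k`. -/
theorem stmt_8 (Fq : Type) [Field Fq] [Fintype Fq] (s m : ℕ) (hs : 1 ≤ s) (hsm : s ≤ m)
    (hm : 0 < m) (γ : Fin m → Fq) (hγinj : Function.Injective γ) (hγ0 : ∀ j, γ j ≠ 0)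
    (d : Fin m → ℕ) (hd : StrictAnti d) (hd1 : ∀ j, 1 ≤ d j)
    (r : ℕ) (hr : 0 < r) (k : ℕ) (hk1 : 1 ≤ k) (hks : k ≤ s)
    (U : Submodule Fq (Fin r → Fin m → Fq)) (hU : Module.finrank Fq U = k) :
    Nat.card ↥((U : Set (Fin r → Fin m → Fq)) ∩
        {x | ∀ b : Fin r, x b ∈ {x₀ : Fin m → Fq | ∀ i : Fin s,
          ∑ j, (γ j) ^ ((i : ℕ) + 1) * x₀ j ^ d j = 0}})
      ≤ d ⟨0, hm⟩ ^ k := by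
  classical
  set S := ((U : Set (Fin r → Fin m → Fq)) ∩
        {x | ∀ b : Fin r, x b ∈ {x₀ : Fin m → Fq | ∀ i : Fin s,
          ∑ j, (γ j) ^ ((i : ℕ) + 1) * x₀ j ^ d j = 0}})
  set d₀ := d ⟨0, hm⟩
  have hd₀ : ∀ j, d j ≤ d₀ := fun j => hd.antitone (Fin.mk_le_of_le_val (Nat.zero_le _))
  let φ : Fin r ×ₗ Fin m → Module.Dual Fq U := fun i =>
    LinearMap.proj (ofLex i).2 ∘ₗ LinearMap.proj (ofLex i).1 ∘ₗ U.subtype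
  obtain ⟨p, hpcard, hp⟩ := exists_pivots (F := Fq) φ
  rw [Subspace.dual_finrank_eq, hU] at hpcard
  let X : Fin r ×ₗ Fin m → S → Fq := fun i x => x.1 (ofLex i).1 (ofLex i).2
  -- restriction of linear forms from `U` to `S`
  let res : Module.Dual Fq U →ₗ[Fq] (S → Fq) :=
    LinearMap.pi fun x => LinearMap.applyₗ (⟨x.1, x.2.1⟩ : U)
  have hX : ∀ i, X i ∈ Submodule.span Fq (X '' {j | j ∈ p ∧ j ≤ i}) := fun i => by
    have := Submodule.mem_map_of_mem (f := res) (hp i)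
    rw [Submodule.map_span, Set.image_image] at this
    exact this
  let w : p → ℕ := fun i =>
    (d₀ + 1) ^ ((ofLex i.1).1 : ℕ) * (d₀.factorial / d (ofLex i.1).2)
  have hinj : Function.Injective fun (x : S) (i : p) => X i x := fun x y hxy => by
    have hall : ∀ i, X i x = X i y := fun i => by
      have hle : Submodule.span Fq (X '' {j | j ∈ p ∧ j ≤ i}) ≤
          LinearMap.eqLocus (LinearMap.proj x) (LinearMap.proj y) := by
        rw [Submodule.span_le]
        rintro _ ⟨j, ⟨hj, -⟩, rfl⟩
        exact congrFun hxy ⟨j, hj⟩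
      exact hle (hX i)
    exact Subtype.ext (funext fun b => funext fun j => hall (toLex (b, j)))
  have hnonpivot : ∀ i ∉ p, X i ^ d (ofLex i).2 ∈ weightSpan Fq (fun l : p => X l) w
      ((d₀ + 1) ^ ((ofLex i).1 : ℕ) * d₀.factorial - 1) := fun i hi => by
    refine weightSpan_mono (Nat.mul_div_le _ (d (ofLex i).2)) (pow_mem_weightSpan ?_ _)
    refine Submodule.span_le.2 ?_ (hX i)
    rintro _ ⟨j, ⟨hj, hji⟩, rfl⟩
    refine weightSpan_mono ?_ (generator_mem_weightSpan (t := fun l : p => X l) ⟨j, hj⟩)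
    rw [Nat.le_div_iff_mul_le (hd1 _), mul_comm]
    exact Nat.le_sub_one_of_lt
      (mul_weight_lt hd hd1 hd₀ (lt_of_le_of_ne hji fun h => hi (h ▸ hj)))
  have hpivot : ∀ i : p, ∃ n < w i * d (ofLex i.1).2,
      X i ^ d (ofLex i.1).2 ∈ weightSpan Fq (fun l : p => X l) w n := by
    rintro ⟨i, hi⟩
    have hwi : w ⟨i, hi⟩ * d (ofLex i).2 = (d₀ + 1) ^ ((ofLex i).1 : ℕ) * d₀.factorial := by
      rw [mul_assoc, Nat.div_mul_cancel (Nat.dvd_factorial (hd1 _) (hd₀ _))]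
    refine ⟨(d₀ + 1) ^ ((ofLex i).1 : ℕ) * d₀.factorial - 1, ?_, ?_⟩
    · rw [hwi]
      exact Nat.sub_one_lt (by positivity)
    let Q : Finset (Fin m) := {j | toLex ((ofLex i).1, j) ∈ p}
    have hQ : #Q ≤ s := by
      refine le_trans (card_le_card_of_injOn (fun j => toLex ((ofLex i).1, j)) ?_ ?_)
        (hpcard.trans hks)
      · exact fun j hj => (mem_filter.1 hj).2
      · exact fun j _ j' _ h => (Prod.ext_iff.1 (toLex.injective h)).2
    obtain ⟨c, hc⟩ := exists_elimination hγinj hγ0 Q hQ (j₀ := (ofLex i).2)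
      (mem_filter.2 ⟨mem_univ _, hi⟩)
    have hXi : X i ^ d (ofLex i).2 = ∑ j ∈ Qᶜ, c j • X (toLex ((ofLex i).1, j)) ^ d j := by
      ext x
      simpa [X] using hc (fun j => x.1 (ofLex i).1 j ^ d j) (x.2.2 (ofLex i).1)
    change X i ^ d (ofLex i).2 ∈ _
    rw [hXi]
    refine Submodule.sum_mem _ fun j hj => Submodule.smul_mem _ _
      (hnonpivot (toLex ((ofLex i).1, j)) fun h => ?_)
    exact mem_compl.1 hj (mem_filter.2 ⟨mem_univ _, h⟩)
  calc Nat.card S ≤ ∏ i : p, d (ofLex i.1).2 := card_le_prod_of_pow_mem_weightSpan hinj hpivot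
    _ ≤ ∏ _i : p, d₀ := prod_le_prod' fun i _ => hd₀ _
    _ = d₀ ^ #p := by simp
    _ ≤ d₀ ^ k := Nat.pow_le_pow_right (hd1 _) hpcard
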